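/- Let n ≥ 3 and 0 ≤ i ≤ n−2 be integers with n > i² + 5i + 1, and let l ≥ 1. Let L be the weight vector in ℙⁿ with lᵢ = l and all other entries zero (a homogeneous configuration of l generic i-dimensional subspaces). If l·(i+1) ≤ n+3 then L is feasible, and if l > ⌈(n+3)/(i+1)⌉ then L is non-feasible. -/

import Mathlib

noncomputable section

/-- Projective space `ℙⁿ(ℂ)`, the projectivization of `ℂ^{n+1}`. -/
abbrev PP (k : ℕ) := Projectivization ℂ (Fin (k + 1) → ℂ)

/-- The vector of the monomials `s^k t^(n-k)`, used to parametrize rational normal curves. -/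
def veron (n : ℕ) (v : Fin 2 → ℂ) : Fin (n + 1) → ℂ :=
  fun k => v 0 ^ (k : ℕ) * v 1 ^ (n - (k : ℕ))

/-- `C ⊆ ℙⁿ` is a rational normal curve if it is the image of `[s:t] ↦ [F₀(s,t):⋯:Fₙ(s,t)]`
for a basis `F₀,…,Fₙ` of the degree-`n` binary forms; such a basis is encoded by an
invertible matrix of coefficients applied to the monomial vector `veron`. -/
def IsRNC (n : ℕ) (C : Set (PP n)) : Prop :=
  ∃ M : Matrix (Fin (n + 1)) (Fin (n + 1)) ℂ, IsUnit M.det ∧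
    C = {P : PP n | ∃ v : Fin 2 → ℂ, v ≠ 0 ∧ ∃ c : ℂ, c ≠ 0 ∧
      P.rep = c • M.mulVec (veron n v)}

/-- The linear subspace of `ℙⁿ` given as the projectivization of the column span of a matrix. -/
def projSet {n m : ℕ} (A : Matrix (Fin (n + 1)) (Fin m) ℂ) : Set (PP n) :=
  {P : PP n | P.rep ∈ Submodule.span ℂ (Set.range fun j => fun r => A r j)}

/-- A configuration of weight `L = (l₀,…,l_{n-2})`: for each `i`, `lᵢ` matrices of size
`(n+1) × (i+1)`, whose column spans give the `i`-dimensional components. -/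
abbrev Config (n : ℕ) (L : Fin (n - 1) → ℕ) :=
  (i : Fin (n - 1)) → Fin (L i) → Matrix (Fin (n + 1)) (Fin (i.1 + 1)) ℂ

/-- All matrices of the configuration have full rank. -/
def FullRank {n : ℕ} {L : Fin (n - 1) → ℕ} (A : Config n L) : Prop :=
  ∀ i j, (A i j).rank = i.1 + 1

/-- A curve `C` maximally intersects the configuration `A`: it meets every `i`-dimensional
component in exactly `i+1` distinct points. -/
def MaxIntersects {n : ℕ} {L : Fin (n - 1) → ℕ} (C : Set (PP n)) (A : Config n L) : Prop :=
  ∀ i j, (C ∩ projSet (A i j)).ncard = i.1 + 1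

/-- A property `Q` holds for a generic configuration of weight `L`: there is a nonzero
polynomial in the matrix entries such that `Q` holds at every full-rank tuple of matrices
where the polynomial does not vanish. -/
def GenHolds (n : ℕ) (L : Fin (n - 1) → ℕ) (Q : Config n L → Prop) : Prop :=
  ∃ F : MvPolynomial ((i : Fin (n - 1)) × (Fin (L i) × Fin (n + 1) × Fin (i.1 + 1))) ℂ,
    F ≠ 0 ∧ ∀ A : Config n L, FullRank A →
      MvPolynomial.eval (fun p => A p.1 p.2.1 p.2.2.1 p.2.2.2) F ≠ 0 → Q A

/-- `L` is feasible: a generic configuration of weight `L` is maximally intersected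
by some rational normal curve. -/
def Feasible (n : ℕ) (L : Fin (n - 1) → ℕ) : Prop :=
  GenHolds n L fun A => ∃ C : Set (PP n), IsRNC n C ∧ MaxIntersects C A

/-- `L` is non-feasible: for a generic configuration of weight `L`, no rational normal
curve maximally intersects it. -/
def NonFeasible (n : ℕ) (L : Fin (n - 1) → ℕ) : Prop :=
  GenHolds n L fun A => ¬ ∃ C : Set (PP n), IsRNC n C ∧ MaxIntersects C A


/-!
Feasibility is Castelnuovo's theorem: the Gale dual of `n + 3` points in general position in `ℙⁿ`
consists of `n + 3` distinct points of `ℙ¹`, and the given points are projectively equivalent to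
their image under the Veronese map of degree `n`. So if there are at most `n + 3` columns in total,
a rational normal curve passes through all of them.

Non-feasibility is a dimension count. A maximally intersected configuration is determined by the
matrix of the curve, the parameters in `ℂ²` of the intersection points, and the coordinates of its
columns with respect to these points. Rescaling the parameters, moving three of them to
`0, 1, ∞ ∈ ℙ¹` and rescaling the matrix of the curve, one can fix `N + 4` of these coordinates,
where `N` is the number of intersection points. If fewer coordinates remain than there are matrix
entries in a configuration, these entries satisfy a nontrivial polynomial relation.
-/

open Module
open scoped Matrix

/-! ### Families of vectors in general position -/

/-- Linearly general position of a family of vectors (for instance, representatives of points of a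
projective space): every subfamily that is small enough to be linearly independent is so. -/
def InGeneralPosition (K : Type*) {ι V : Type*} [Field K] [AddCommGroup V] [Module K V]
    (x : ι → V) : Prop :=
  ∀ s : Finset ι, s.card ≤ finrank K V → LinearIndepOn K x s

namespace InGeneralPosition

variable {K ι κ V W : Type*} [Field K] [AddCommGroup V] [Module K V] [AddCommGroup W] [Module K W]
  {x y : ι → V}

lemma of_card_eq_finrank [Fintype ι] (hcard : finrank K V ≤ Fintype.card ι)
    (h : ∀ s : Finset ι, s.card = finrank K V → LinearIndepOn K x s) : InGeneralPosition K x := by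
  intro s hs
  obtain ⟨t, hst, ht⟩ := Finset.exists_superset_card_eq hs hcard
  exact (h t ht).mono (Finset.coe_subset.mpr hst)

lemma of_finrank_eq_two (hV : finrank K V = 2) (hne : ∀ i, x i ≠ 0)
    (hx : ∀ i j, i ≠ j → ∀ a : K, a • x i ≠ x j) : InGeneralPosition K x := by
  intro s hs
  rw [hV] at hs
  interval_cases hcard : s.card
  · rw [Finset.card_eq_zero.mp hcard, Finset.coe_empty]
    exact linearIndepOn_empty K x
  · obtain ⟨i, rfl⟩ := Finset.card_eq_one.mp hcard
    rw [Finset.coe_singleton, linearIndepOn_singleton_iff]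
    exact hne i
  · classical
    obtain ⟨i, j, hij, rfl⟩ := Finset.card_eq_two.mp hcard
    rw [Finset.coe_pair, linearIndepOn_pair_iff x hij (hne i)]
    exact hx i j hij

lemma ne_zero (hx : InGeneralPosition K x) (hV : 0 < finrank K V) (i : ι) : x i ≠ 0 := by
  have := hx {i} (by rwa [Finset.card_singleton])
  rwa [Finset.coe_singleton, linearIndepOn_singleton_iff] at this

lemma exists_dual_ne_zero_forall_eq_zero (hx : InGeneralPosition K x) {i : ι} {s : Finset ι}
    (hi : i ∉ s) (hs : s.card < finrank K V) :
    ∃ f : Dual K V, f (x i) ≠ 0 ∧ ∀ j ∈ s, f (x j) = 0 := by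
  classical
  have hind := hx (insert i s) (by rw [Finset.card_insert_of_notMem hi]; exact hs)
  rw [Finset.coe_insert, linearIndepOn_insert hi] at hind
  obtain ⟨f, hf, hfs⟩ := Submodule.exists_le_ker_of_notMem hind.2
  exact ⟨f, hf, fun j hj => hfs (Submodule.subset_span (Set.mem_image_of_mem x hj))⟩

lemma smul (hx : InGeneralPosition K x) {c : ι → K} (hc : ∀ i, c i ≠ 0) :
    InGeneralPosition K (fun i => c i • x i) := fun s hs =>
  (hx s hs).units_smul fun i => Units.mk0 (c i) (hc i)

lemma map_of_injective (hx : InGeneralPosition K x) {f : V →ₗ[K] W} (hf : Function.Injective f)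
    (hVW : finrank K W ≤ finrank K V) : InGeneralPosition K (fun i => f (x i)) := fun s hs =>
  (hx s (hs.trans hVW)).map_injOn f hf.injOn

lemma linearIndependent [Fintype ι] (hx : InGeneralPosition K x)
    (hcard : Fintype.card ι ≤ finrank K V) : LinearIndependent K x := by
  simpa using hx Finset.univ hcard

lemma eq_zero_of_sum_eq_zero [Fintype ι] (hx : InGeneralPosition K x) {c : ι → K}
    (hc : ∑ i, c i • x i = 0) {s : Finset ι} (hs : s.card ≤ finrank K V)
    (hcs : ∀ i ∉ s, c i = 0) : c = 0 := by
  have hsum : ∑ i ∈ s, c i • x i = 0 := by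
    rw [← hc]
    exact Finset.sum_subset s.subset_univ fun i _ hi => by rw [hcs i hi, zero_smul]
  funext i
  by_cases hi : i ∈ s
  · exact linearIndepOn_finset_iff.mp (hx s hs) c hsum i hi
  · exact hcs i hi

lemma linearCombination_surjective [Fintype ι] [FiniteDimensional K V]
    (hx : InGeneralPosition K x) (hcard : finrank K V ≤ Fintype.card ι) :
    Function.Surjective (Fintype.linearCombination K x) := by
  obtain ⟨s, -, hs⟩ := Finset.exists_superset_card_eq (s := (∅ : Finset ι)) (by simp) hcard
  have hspan := (hx s hs.le).span_eq_top_of_card_eq_finrank' (by simpa using hs)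
  rw [← LinearMap.range_eq_top, Fintype.range_linearCombination, eq_top_iff, ← hspan]
  exact Submodule.span_mono (Set.range_comp_subset_range _ _)

lemma finrank_ker_add_finrank [Fintype ι] [FiniteDimensional K V]
    (hx : InGeneralPosition K x) (hcard : finrank K V ≤ Fintype.card ι) :
    finrank K (Fintype.linearCombination K x).ker + finrank K V = Fintype.card ι := by
  have := (Fintype.linearCombination K x).finrank_range_add_finrank_ker
  rw [LinearMap.range_eq_top.mpr (hx.linearCombination_surjective hcard), finrank_top,
    finrank_fintype_fun_eq_card] at this
  omega

lemma exists_linearIndependent_relations [Fintype ι] [Fintype κ] [FiniteDimensional K V]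
    (hx : InGeneralPosition K x) (hcard : Fintype.card ι = finrank K V + Fintype.card κ) :
    ∃ c : κ → ι → K, LinearIndependent K c ∧ ∀ k, ∑ i, c k i • x i = 0 := by
  have hker : finrank K (Fintype.linearCombination K x).ker = Fintype.card κ := by
    have := hx.finrank_ker_add_finrank (by omega)
    omega
  let b := (finBasisOfFinrankEq K _ hker).reindex (Fintype.equivFin κ).symm
  exact ⟨fun k => (b k : ι → K),
    b.linearIndependent.map' (Submodule.subtype _) (Submodule.ker_subtype _), fun k => (b k).2⟩

lemma exists_relation_forall_ne_zero [Fintype ι] [FiniteDimensional K V]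
    (hx : InGeneralPosition K x) (hcard : Fintype.card ι = finrank K V + 1) :
    ∃ c : ι → K, (∀ i, c i ≠ 0) ∧ ∑ i, c i • x i = 0 := by
  classical
  obtain ⟨c, hc, hcx⟩ := hx.exists_linearIndependent_relations (κ := Unit) hcard
  refine ⟨c (), fun i hi => hc.ne_zero () ?_, hcx ()⟩
  refine hx.eq_zero_of_sum_eq_zero (hcx ()) (s := Finset.univ.erase i) ?_ fun j hj => ?_
  · simp [hcard]
  · obtain rfl : j = i := by simpa using hj
    exact hi

/-- Gale duality: a linear functional on `κ → K` killing too many of the dual vectors would give a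
linear relation between too few of the vectors `x i`. -/
lemma gale_dual [Fintype ι] [Fintype κ] (hx : InGeneralPosition K x)
    (hcard : Fintype.card ι = finrank K V + Fintype.card κ) {c : κ → ι → K}
    (hc : LinearIndependent K c) (hcx : ∀ k, ∑ i, c k i • x i = 0) :
    InGeneralPosition K (fun i k => c k i) := by
  classical
  refine of_card_eq_finrank (by simp [hcard]) fun s hs => ?_
  rw [finrank_fintype_fun_eq_card] at hs
  refine linearIndependent_of_top_le_span_of_card_eq_finrank (top_le_iff.mpr ?_) (by simpa using hs)
  by_contra hspan
  obtain ⟨f, hf, hfs⟩ := Submodule.exists_le_ker_of_lt_top _ (lt_top_iff_ne_top.mpr hspan)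
  obtain ⟨w, rfl⟩ := (dotProductEquiv K κ).surjective f
  have hrel : ∑ i, (w ⬝ᵥ fun k => c k i) • x i = 0 := by
    simp_rw [dotProduct, Finset.sum_smul, mul_smul]
    rw [Finset.sum_comm]
    simp_rw [← Finset.smul_sum, hcx, smul_zero, Finset.sum_const_zero]
  have hzero : (fun i => w ⬝ᵥ fun k => c k i) = 0 := by
    refine hx.eq_zero_of_sum_eq_zero hrel (s := sᶜ) ?_ fun i hi => ?_
    · rw [Finset.card_compl]
      omega
    · exact hfs (Submodule.subset_span ⟨⟨i, by simpa using hi⟩, rfl⟩)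
  have hw : w = 0 := funext <| Fintype.linearIndependent_iff.mp hc w <| funext fun i => by
    simpa [dotProduct] using congr_fun hzero i
  exact hf (by rw [hw, map_zero])

lemma ker_linearCombination_eq_span [Fintype ι] [Fintype κ] [FiniteDimensional K V]
    (hx : InGeneralPosition K x) (hcard : Fintype.card ι = finrank K V + Fintype.card κ)
    {c : κ → ι → K} (hc : LinearIndependent K c) (hcx : ∀ k, ∑ i, c k i • x i = 0) :
    (Fintype.linearCombination K x).ker = Submodule.span K (Set.range c) := by
  have hker := hx.finrank_ker_add_finrank (by omega)
  refine (Submodule.eq_of_le_of_finrank_le ?_ ?_).symm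
  · rw [Submodule.span_le]
    rintro _ ⟨k, rfl⟩
    exact hcx k
  · rw [finrank_span_eq_card hc]
    omega

lemma exists_linearEquiv_of_relations [Fintype ι] [Fintype κ] [FiniteDimensional K V]
    (hx : InGeneralPosition K x) (hy : InGeneralPosition K y)
    (hcard : Fintype.card ι = finrank K V + Fintype.card κ) {c : κ → ι → K}
    (hc : LinearIndependent K c) (hcx : ∀ k, ∑ i, c k i • x i = 0)
    (hcy : ∀ k, ∑ i, c k i • y i = 0) : ∃ e : V ≃ₗ[K] V, ∀ i, e (x i) = y i := by
  classical
  have hker : (Fintype.linearCombination K x).ker = (Fintype.linearCombination K y).ker := by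
    rw [hx.ker_linearCombination_eq_span hcard hc hcx,
      hy.ker_linearCombination_eq_span hcard hc hcy]
  let ex := LinearMap.quotKerEquivOfSurjective _ (hx.linearCombination_surjective (by omega))
  let ey := LinearMap.quotKerEquivOfSurjective _ (hy.linearCombination_surjective (by omega))
  refine ⟨ex.symm ≪≫ₗ Submodule.quotEquivOfEq _ _ hker ≪≫ₗ ey, fun i => ?_⟩
  have hex : ex (Submodule.Quotient.mk (Pi.single i 1)) = x i := by
    simp [ex]
  rw [← hex]
  simp [ey]

end InGeneralPosition

/-! ### The Veronese map -/

section Veronese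

variable {ι : Type*} {n : ℕ}

lemma veron_smul (c : ℂ) (v : Fin 2 → ℂ) : veron n (c • v) = c ^ n • veron n v := by
  funext k
  simp only [veron, Pi.smul_apply, smul_eq_mul, mul_pow]
  rw [mul_mul_mul_comm, ← pow_add, Nat.add_sub_of_le k.is_le]

lemma veron_succ_succ (v : Fin 2 → ℂ) (k : Fin (n + 1)) :
    veron (n + 1) v k.succ = v 0 * veron n v k := by
  simp only [veron, Fin.val_succ, Nat.add_sub_add_right, pow_succ']
  ring

lemma veron_succ_castSucc (v : Fin 2 → ℂ) (k : Fin (n + 1)) :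
    veron (n + 1) v k.castSucc = v 1 * veron n v k := by
  simp only [veron, Fin.val_castSucc, Nat.succ_sub k.is_le, pow_succ']
  ring

lemma exists_linearMap_veron_succ (w : Fin 2 → ℂ) :
    ∃ T : (Fin (n + 2) → ℂ) →ₗ[ℂ] (Fin (n + 1) → ℂ),
      ∀ v, T (veron (n + 1) v) = (w ⬝ᵥ v) • veron n v := by
  refine ⟨w 0 • LinearMap.funLeft ℂ ℂ Fin.succ + w 1 • LinearMap.funLeft ℂ ℂ Fin.castSucc,
    fun v => funext fun k => ?_⟩
  simp only [LinearMap.add_apply, LinearMap.smul_apply, Pi.add_apply, Pi.smul_apply, smul_eq_mul,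
    LinearMap.funLeft_apply, veron_succ_succ, veron_succ_castSucc, dotProduct,
    Fin.sum_univ_two]
  ring

lemma sum_mul_smul_veron_eq_zero {s : Finset ι} {g : ι → ℂ} {P : ι → Fin 2 → ℂ}
    (h : ∑ k ∈ s, g k • veron (n + 1) (P k) = 0) (w : Fin 2 → ℂ) :
    ∑ k ∈ s, (g k * (w ⬝ᵥ P k)) • veron n (P k) = 0 := by
  obtain ⟨T, hT⟩ := exists_linearMap_veron_succ (n := n) w
  simpa only [map_sum, map_smul, hT, smul_smul, map_zero] using congr_arg T h

/-- Contracting a relation with a linear form that vanishes at one point of its support, but not at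
the point `k` of interest, lowers the degree of the Veronese map and the size of the support. -/
lemma InGeneralPosition.veron {P : ι → Fin 2 → ℂ} (hP : InGeneralPosition ℂ P) (n : ℕ) :
    InGeneralPosition ℂ fun k => veron n (P k) := by
  classical
  simp only [InGeneralPosition, finrank_fintype_fun_eq_card, Fintype.card_fin]
  induction n with
  | zero =>
    intro s hs
    refine linearIndepOn_finset_iff.mpr fun g hg k hk => ?_
    rw [Finset.eq_singleton_iff_unique_mem.mpr ⟨hk, fun j hj =>
      Finset.card_le_one.mp hs j hj k hk⟩, Finset.sum_singleton] at hg
    simpa [_root_.veron] using congr_fun hg 0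
  | succ n ih =>
    intro s hs
    refine linearIndepOn_finset_iff.mpr fun g hg k hk => ?_
    obtain ⟨t, ht, htcard⟩ : ∃ t ⊆ s.erase k, t.card = s.card - (n + 1) :=
      Finset.exists_subset_card_eq (by rw [Finset.card_erase_of_mem hk]; omega)
    have hts : t ⊆ s := ht.trans (s.erase_subset k)
    have hkt : k ∉ t := fun h => Finset.notMem_erase k s (ht h)
    obtain ⟨f, hfk, hft⟩ := hP.exists_dual_ne_zero_forall_eq_zero hkt (by simp; omega)
    obtain ⟨w, rfl⟩ := (dotProductEquiv ℂ (Fin 2)).surjective f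
    simp only [dotProductEquiv_apply_apply] at hfk hft
    have hsum : ∑ j ∈ s \ t, (g j * (w ⬝ᵥ P j)) • _root_.veron n (P j) = 0 := by
      rw [← sum_mul_smul_veron_eq_zero hg w]
      refine Finset.sum_subset Finset.sdiff_subset fun j hj hjt => ?_
      rw [hft j (by simpa [hj] using hjt), mul_zero, zero_smul]
    have hcard : (s \ t).card ≤ n + 1 := by
      rw [Finset.card_sdiff_of_subset hts]
      omega
    have := linearIndepOn_finset_iff.mp (ih (s \ t) hcard) _ hsum k
      (Finset.mem_sdiff.mpr ⟨hk, hkt⟩)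
    exact (mul_eq_zero.mp this).resolve_right hfk

lemma exists_veron_mulVec_eq (n : ℕ) (g : Matrix (Fin 2) (Fin 2) ℂ) :
    ∃ S : Matrix (Fin (n + 1)) (Fin (n + 1)) ℂ, ∀ v, veron n (g *ᵥ v) = S *ᵥ veron n v := by
  suffices ∀ k, ∃ f : Dual ℂ (Fin (n + 1) → ℂ), ∀ v, veron n (g *ᵥ v) k = f (veron n v) by
    choose f hf using this
    refine ⟨LinearMap.toMatrix' (LinearMap.pi f), fun v => funext fun k => ?_⟩
    rw [LinearMap.toMatrix'_mulVec, LinearMap.pi_apply, hf]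
  induction n with
  | zero => exact fun k => ⟨LinearMap.proj 0, fun v => by simp [veron]⟩
  | succ n ih =>
    have hmul : ∀ (k : Fin (n + 1)) (i : Fin 2), ∃ f : Dual ℂ (Fin (n + 2) → ℂ),
        ∀ v, (g *ᵥ v) i * veron n (g *ᵥ v) k = f (veron (n + 1) v) := fun k i => by
      obtain ⟨f, hf⟩ := ih k
      obtain ⟨T, hT⟩ := exists_linearMap_veron_succ (n := n) (g i)
      exact ⟨f ∘ₗ T, fun v => by rw [LinearMap.comp_apply, hT, map_smul, ← hf]; rfl⟩
    intro k
    cases k using Fin.cases with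
    | zero => simpa only [← veron_succ_castSucc, Fin.castSucc_zero] using hmul 0 1
    | succ k => simpa only [← veron_succ_succ] using hmul k 0

end Veronese

/-! ### Rational normal curves -/

/-- The punctured affine cone over the image of `[s:t] ↦ M (veron n (s,t))` in `ℙⁿ`. -/
def ratNormalCone (n : ℕ) (M : Matrix (Fin (n + 1)) (Fin (n + 1)) ℂ) : Set (Fin (n + 1) → ℂ) :=
  {x | ∃ v : Fin 2 → ℂ, v ≠ 0 ∧ ∃ c : ℂ, c ≠ 0 ∧ x = c • M *ᵥ veron n v}

/-- The image of `[s:t] ↦ M (veron n (s,t))` in `ℙⁿ`, so that a rational normal curve in the sense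
of `IsRNC` is a set `ratNormalCurve n M` with `M` invertible. -/
def ratNormalCurve (n : ℕ) (M : Matrix (Fin (n + 1)) (Fin (n + 1)) ℂ) : Set (PP n) :=
  {P | P.rep ∈ ratNormalCone n M}

/-- The matrix whose columns are the Veronese vectors of the points `v s`. -/
def veronMatrix (n : ℕ) {ι : Type*} (v : ι → Fin 2 → ℂ) : Matrix (Fin (n + 1)) ι ℂ :=
  Matrix.of fun r s => veron n (v s) r

section RatNormalCurve

variable {ι : Type*} {n m : ℕ} {M : Matrix (Fin (n + 1)) (Fin (n + 1)) ℂ}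

lemma isRNC_iff {C : Set (PP n)} : IsRNC n C ↔ ∃ M, IsUnit M.det ∧ C = ratNormalCurve n M :=
  Iff.rfl

/-- Castelnuovo's theorem. The Gale dual of `x` is a family of vectors of the plane; up to scaling,
its image under the Veronese map satisfies the same linear relations as `x`. -/
lemma exists_forall_mem_ratNormalCone [Fintype ι] (hcard : Fintype.card ι = n + 3)
    {x : ι → Fin (n + 1) → ℂ} (hx : InGeneralPosition ℂ x) :
    ∃ M : Matrix (Fin (n + 1)) (Fin (n + 1)) ℂ, IsUnit M.det ∧
      ∀ i, x i ∈ ratNormalCone n M := by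
  obtain ⟨c, hc, hcx⟩ := hx.exists_linearIndependent_relations (κ := Fin 2) (by simp [hcard])
  have hP : InGeneralPosition ℂ fun i k => c k i := hx.gale_dual (by simp [hcard]) hc hcx
  obtain ⟨g, hg, hgP⟩ := (hP.veron (n + 1)).exists_relation_forall_ne_zero (by simp [hcard])
  have hy := (hP.veron n).smul hg
  have hcy : ∀ k, ∑ i, c k i • g i • veron n (fun k => c k i) = 0 := fun k => by
    simpa [smul_smul, mul_comm] using sum_mul_smul_veron_eq_zero hgP (Pi.single k 1)
  obtain ⟨e, he⟩ := hy.exists_linearEquiv_of_relations hx (by simp [hcard]) hc hcy hcx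
  refine ⟨LinearMap.toMatrix' (e : (Fin (n + 1) → ℂ) →ₗ[ℂ] _), ?_, fun i =>
    ⟨fun k => c k i, hP.ne_zero (by simp) i, g i, hg i, ?_⟩⟩
  · simpa using e.isUnit_det'
  · rw [← Matrix.mulVec_smul, LinearMap.toMatrix'_mulVec, LinearEquiv.coe_coe, he]

lemma mk_mem_ratNormalCurve {x : Fin (n + 1) → ℂ} (hx : x ≠ 0) (hxM : x ∈ ratNormalCone n M) :
    Projectivization.mk ℂ x hx ∈ ratNormalCurve n M := by
  obtain ⟨v, hv, c, hc, rfl⟩ := hxM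
  obtain ⟨a, ha⟩ := Projectivization.exists_smul_eq_mk_rep ℂ _ hx
  exact ⟨v, hv, a * c, mul_ne_zero a.ne_zero hc, by rw [← ha, Units.smul_def, smul_smul]⟩

lemma mk_mem_projSet {A : Matrix (Fin (n + 1)) (Fin m) ℂ} {j : Fin m} (hj : A.col j ≠ 0) :
    Projectivization.mk ℂ (A.col j) hj ∈ projSet A := by
  obtain ⟨a, ha⟩ := Projectivization.exists_smul_eq_mk_rep ℂ _ hj
  change Projectivization.rep _ ∈ Submodule.span ℂ _
  rw [← ha]
  exact Submodule.smul_mem _ _ (Submodule.subset_span ⟨j, rfl⟩)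

lemma inGeneralPosition_rep (hM : IsUnit M.det) {p : ι → PP n} (hp : Function.Injective p)
    (hpM : ∀ i, p i ∈ ratNormalCurve n M) : InGeneralPosition ℂ fun i => (p i).rep := by
  choose v hv c hc hrep using hpM
  have hvp : InGeneralPosition ℂ v := by
    refine .of_finrank_eq_two (by simp) hv fun i j hij a ha => hij (hp ?_)
    rw [← (p i).mk_rep, ← (p j).mk_rep, eq_comm, Projectivization.mk_eq_mk_iff']
    refine ⟨c j * a ^ n / c i, ?_⟩
    rw [hrep j, ← ha, veron_smul, Matrix.mulVec_smul, hrep i, smul_smul, smul_smul,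
      div_mul_cancel₀ _ (hc i)]
  have hinj : Function.Injective M.mulVecLin :=
    Matrix.mulVec_injective_of_isUnit (M.isUnit_iff_isUnit_det.mpr hM)
  simp_rw [hrep]
  exact ((hvp.veron n).map_of_injective hinj le_rfl).smul hc

lemma encard_ratNormalCurve_inter_projSet_le (hM : IsUnit M.det) (hm : m ≤ n)
    (A : Matrix (Fin (n + 1)) (Fin m) ℂ) : (ratNormalCurve n M ∩ projSet A).encard ≤ m := by
  by_contra! h
  obtain ⟨t, ht, htcard⟩ := Set.exists_subset_encard_eq (Order.add_one_le_of_lt h)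
  have : Fintype t := (Set.finite_of_encard_eq_coe (k := m + 1) htcard).fintype
  have hcard : Fintype.card t = m + 1 := by
    rw [← Set.toFinset_card, ← ENat.natCast_inj, ← Set.encard_eq_coe_toFinset_card, htcard]
    rfl
  have hind : LinearIndependent ℂ fun P : t => P.1.rep :=
    (inGeneralPosition_rep hM Subtype.val_injective fun P : t => (ht P.2).1).linearIndependent
      (by simp [hcard, hm])
  have hspan : Submodule.span ℂ (Set.range fun P : t => P.1.rep) ≤
      Submodule.span ℂ (Set.range A.col) :=
    Submodule.span_le.mpr (Set.range_subset_iff.mpr fun P => (ht P.2).2)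
  have := Submodule.finrank_mono hspan
  rw [finrank_span_eq_card hind, hcard] at this
  have := finrank_range_le_card (R := ℂ) A.col
  simp only [Set.finrank, Fintype.card_fin] at this
  omega

lemma ncard_ratNormalCurve_inter_projSet (hM : IsUnit M.det) (hm : m ≤ n)
    {A : Matrix (Fin (n + 1)) (Fin m) ℂ} (hA : LinearIndependent ℂ A.col)
    (hAM : ∀ j, A.col j ∈ ratNormalCone n M) : (ratNormalCurve n M ∩ projSet A).ncard = m := by
  have hle := encard_ratNormalCurve_inter_projSet_le hM hm A
  have hfin : (ratNormalCurve n M ∩ projSet A).Finite := Set.finite_of_encard_le_coe hle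
  refine le_antisymm (by rwa [← Nat.cast_le (α := ℕ∞), hfin.cast_ncard_eq]) ?_
  have hinj := (Projectivization.independent_iff.mp
    (.mk _ hA.ne_zero hA)).injective.of_comp
  have hsub := Set.ncard_le_ncard (Set.range_subset_iff.mpr fun j =>
    (⟨mk_mem_ratNormalCurve (hA.ne_zero j) (hAM j), mk_mem_projSet (hA.ne_zero j)⟩ :
      _ ∈ ratNormalCurve n M ∩ projSet A)) hfin
  rwa [← Nat.card_coe_set_eq, Nat.card_range_of_injective hinj, Nat.card_fin] at hsub

lemma exists_eq_mul_veronMatrix_mul (hM : IsUnit M.det) (hm : m ≤ n)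
    {A : Matrix (Fin (n + 1)) (Fin (m + 1)) ℂ}
    (hA : (ratNormalCurve n M ∩ projSet A).ncard = m + 1) :
    ∃ (v : Fin (m + 1) → Fin 2 → ℂ) (G : Matrix (Fin (m + 1)) (Fin (m + 1)) ℂ),
      (∀ s, v s ≠ 0) ∧ A = M * veronMatrix n v * G := by
  have : Finite ↥(ratNormalCurve n M ∩ projSet A) :=
    Set.finite_of_ncard_ne_zero (by omega)
  let e : Fin (m + 1) ≃ ↥(ratNormalCurve n M ∩ projSet A) := (Finite.equivFinOfCardEq hA).symm
  have hind : LinearIndependent ℂ fun s => (e s).1.rep :=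
    (inGeneralPosition_rep hM (Subtype.val_injective.comp e.injective)
      fun s => (e s).2.1).linearIndependent (by simp [hm])
  have hspan : Submodule.span ℂ (Set.range fun s => (e s).1.rep) =
      Submodule.span ℂ (Set.range A.col) := by
    refine Submodule.eq_of_le_of_finrank_le
      (Submodule.span_le.mpr (Set.range_subset_iff.mpr fun s => (e s).2.2)) ?_
    rw [finrank_span_eq_card hind]
    exact finrank_range_le_card A.col
  have hcol : ∀ j, ∃ g : Fin (m + 1) → ℂ, ∑ s, g s • (e s).1.rep = A.col j := fun j =>
    (Submodule.mem_span_range_iff_exists_fun ℂ).mp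
      (hspan ▸ Submodule.subset_span (Set.mem_range_self j))
  choose g hg using hcol
  choose v hv c _ hrep using fun s => (e s).2.1
  refine ⟨v, Matrix.of fun s j => g j s * c s, hv, Matrix.ext fun r j => ?_⟩
  change A.col j r = ∑ s, (M *ᵥ veron n (v s)) r * (g j s * c s)
  simp only [← hg j, hrep, Finset.sum_apply, Pi.smul_apply, smul_eq_mul]
  exact Finset.sum_congr rfl fun s _ => by ring

end RatNormalCurve

/-! ### Feasibility -/

section Feasible

lemma exists_ne_zero_forall_inGeneralPosition {K ι τ : Type*} [Field K] [Fintype ι] {d : ℕ}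
    (hd : d ≤ Fintype.card ι) (Y : ι → Fin d → MvPolynomial τ K) (x₀ : τ → K)
    (hx₀ : InGeneralPosition K fun i r => MvPolynomial.eval x₀ (Y i r)) :
    ∃ F : MvPolynomial τ K, F ≠ 0 ∧ ∀ x, MvPolynomial.eval x F ≠ 0 →
      InGeneralPosition K fun i r => MvPolynomial.eval x (Y i r) := by
  classical
  let minor (g : Fin d ↪ ι) : Matrix (Fin d) (Fin d) (MvPolynomial τ K) :=
    Matrix.of fun r c => Y (g c) r
  have hminor : ∀ x g, MvPolynomial.eval x (minor g).det ≠ 0 ↔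
      LinearIndepOn K (fun i r => MvPolynomial.eval x (Y i r)) (Set.range g) := fun x g => by
    rw [linearIndepOn_range_iff g.injective, RingHom.map_det, ← isUnit_iff_ne_zero,
      ← Matrix.isUnit_iff_isUnit_det, ← Matrix.linearIndependent_cols_iff_isUnit]
    rfl
  refine ⟨∏ g : Fin d ↪ ι, (minor g).det, Finset.prod_ne_zero_iff.mpr fun g _ hg => ?_,
    fun x hx => .of_card_eq_finrank (by simpa) fun s hs => ?_⟩
  · refine (hminor x₀ g).mpr ?_ (by rw [hg, map_zero])
    simpa using hx₀ (Finset.univ.map g) (by simp)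
  · let e : Fin d ≃ s := (Fintype.equivFinOfCardEq (by simpa using hs)).symm
    let g : Fin d ↪ ι := e.toEmbedding.trans (Function.Embedding.subtype _)
    have hg : Set.range g = s := (e.surjective.range_comp Subtype.val).trans Subtype.range_coe
    rw [map_prod, Finset.prod_ne_zero_iff] at hx
    exact hg ▸ (hminor x g).mp (hx g (Finset.mem_univ g))

lemma inGeneralPosition_veron_natCast (n m : ℕ) :
    InGeneralPosition ℂ fun i : Fin m => veron n ![(i : ℂ), 1] := by
  refine InGeneralPosition.veron (.of_finrank_eq_two (by simp) (fun i hi => ?_)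
    fun i j hij a ha => hij ?_) n
  · simpa using congr_fun hi 1
  · obtain ⟨h, rfl⟩ : a * i = j ∧ a = 1 := by simpa using ha
    exact Fin.ext (by simpa using h)

/-- The columns of the matrices of a configuration of weight `L`: a component `(j, a)` of dimension
`j` together with one of its `j + 1` columns. If a curve maximally intersects the configuration,
this type also labels the intersection points. -/
abbrev ColumnIndex {n : ℕ} (L : Fin (n - 1) → ℕ) :=
  (j : Fin (n - 1)) × (Fin (L j) × Fin (j.1 + 1))

theorem feasible_of_sum_le {n : ℕ} {L : Fin (n - 1) → ℕ} (hL : ∑ j, L j * (j.1 + 1) ≤ n + 3) :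
    Feasible n L := by
  classical
  obtain ⟨f⟩ : Nonempty (ColumnIndex L ↪ Fin (n + 3)) :=
    Function.Embedding.nonempty_of_card_le (by simpa)
  let y (m : Fin (n + 3)) : Fin (n + 1) → ℂ := veron n ![(m : ℂ), 1]
  let Y (m : Fin (n + 3)) (r : Fin (n + 1)) := Function.extend f
    (fun p => MvPolynomial.X (R := ℂ)
      (⟨p.1, p.2.1, r, p.2.2⟩ : (j : Fin (n - 1)) × (Fin (L j) × Fin (n + 1) × Fin (j.1 + 1))))
    (fun m => MvPolynomial.C (y m r)) m
  let x₀ (q : (j : Fin (n - 1)) × (Fin (L j) × Fin (n + 1) × Fin (j.1 + 1))) : ℂ :=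
    y (f ⟨q.1, q.2.1, q.2.2.2⟩) q.2.2.1
  have hY : ∀ m r, MvPolynomial.eval x₀ (Y m r) = y m r := fun m r => by
    by_cases hm : ∃ p, f p = m
    · obtain ⟨p, rfl⟩ := hm
      simp [Y, x₀, f.injective.extend_apply]
    · simp [Y, Function.extend_apply' _ _ _ hm]
  have hx₀ : InGeneralPosition ℂ fun m r => MvPolynomial.eval x₀ (Y m r) := by
    simp_rw [hY]
    exact inGeneralPosition_veron_natCast n (n + 3)
  obtain ⟨F, hF, hFY⟩ := exists_ne_zero_forall_inGeneralPosition (by simp) Y x₀ hx₀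
  refine ⟨F, hF, fun A hA hFA => ?_⟩
  obtain ⟨M, hM, hxM⟩ := exists_forall_mem_ratNormalCone (Fintype.card_fin _) (hFY _ hFA)
  refine ⟨ratNormalCurve n M, isRNC_iff.mpr ⟨M, hM, rfl⟩, fun j a =>
    ncard_ratNormalCurve_inter_projSet hM (by omega) ?_ fun s => ?_⟩
  · rw [linearIndependent_iff_card_eq_finrank_span, Set.finrank, ← Matrix.rank_eq_finrank_span_cols,
      hA, Fintype.card_fin]
  · have hx := hxM (f ⟨j, a, s⟩)
    simp only [Y, f.injective.extend_apply, MvPolynomial.eval_X] at hx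
    exact hx

end Feasible

/-! ### Algebraic relations between parametrized quantities -/

section AlgebraicRelations

open MvPolynomial

variable {K σ τ : Type*} [Field K] [Fintype σ] [Fintype τ]

lemma exists_ne_zero_aeval_eq_zero (φ : τ → MvPolynomial σ K)
    (hcard : Fintype.card σ < Fintype.card τ) :
    ∃ F : MvPolynomial τ K, F ≠ 0 ∧ aeval φ F = 0 := by
  by_contra! h
  have hφ : AlgebraicIndependent K φ :=
    (injective_iff_map_eq_zero (aeval (R := K) φ)).mpr fun F hF => by_contra fun hF₀ => h F hF₀ hF
  have hle := hφ.lift_cardinalMk_le_trdeg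
  rw [trdeg_of_isDomain] at hle
  simp only [Cardinal.mk_fintype, Cardinal.lift_natCast, Nat.cast_le] at hle
  omega

lemma exists_ne_zero_eval_eq_zero_of_eqOn (φ : τ → MvPolynomial σ K) (s : Finset σ) (y : s → K)
    (hcard : Fintype.card σ < Fintype.card τ + s.card) :
    ∃ F : MvPolynomial τ K, F ≠ 0 ∧
      ∀ x : σ → K, (∀ i : s, x i = y i) → eval (fun t => eval x (φ t)) F = 0 := by
  classical
  let sub (i : σ) : MvPolynomial {i // i ∉ s} K := if hi : i ∈ s then C (y ⟨i, hi⟩) else X ⟨i, hi⟩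
  have hcompl : Fintype.card {i // i ∉ s} < Fintype.card τ := by
    have := s.card_le_univ
    rw [Fintype.card_subtype_compl, Fintype.card_coe]
    omega
  obtain ⟨F, hF, hFφ⟩ := exists_ne_zero_aeval_eq_zero (fun t => aeval sub (φ t)) hcompl
  refine ⟨F, hF, fun x hx => ?_⟩
  have hsub : (aeval fun i : {i // i ∉ s} => x i).comp (aeval sub) = aeval (R := K) x :=
    algHom_ext fun i => by
      by_cases hi : i ∈ s
      · simp [sub, hi, hx ⟨i, hi⟩]
      · simp [sub, hi]
  calc eval (fun t => eval x (φ t)) F = aeval (fun t => aeval x (φ t)) F := by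
        simp only [aeval_eq_eval]
    _ = aeval (fun i : {i // i ∉ s} => x i) (aeval (fun t => aeval sub (φ t)) F) := by
        rw [comp_aeval_apply]
        simp only [← hsub, AlgHom.comp_apply]
    _ = 0 := by rw [hFφ, map_zero]

/-- Restricting `m` of the parameters to finitely many values lowers the number of free parameters
by `m`, and leaves only finitely many parametrizations, whose relations can be multiplied. -/
lemma exists_ne_zero_eval_eq_zero_of_mem (φ : τ → MvPolynomial σ K) (V : Finset K) (m : ℕ)
    (hcard : Fintype.card σ < Fintype.card τ + m) :
    ∃ F : MvPolynomial τ K, F ≠ 0 ∧ ∀ (x : σ → K) (s : Finset σ), m ≤ s.card →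
      (∀ i ∈ s, x i ∈ V) → eval (fun t => eval x (φ t)) F = 0 := by
  classical
  choose F hF hFφ using fun (s : {s : Finset σ // m ≤ s.card}) (y : s.1 → V) =>
    exists_ne_zero_eval_eq_zero_of_eqOn φ s.1 (fun i => (y i : K)) (hcard.trans_le (by grind))
  refine ⟨∏ s, ∏ y, F s y, Finset.prod_ne_zero_iff.mpr fun s _ =>
    Finset.prod_ne_zero_iff.mpr fun y _ => hF s y, fun x s hs hx => ?_⟩
  have hzero := hFφ ⟨s, hs⟩ (fun i => ⟨x i, hx i i.2⟩) x fun _ => rfl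
  simp only [map_prod]
  exact Finset.prod_eq_zero (Finset.mem_univ _) (Finset.prod_eq_zero (Finset.mem_univ _) hzero)

end AlgebraicRelations

/-! ### Normalization of vectors of the plane -/

section Plane

variable {K ι V : Type*} [Field K] [AddCommGroup V] [Module K V]

lemma exists_basis_repr_mem_axes (hV : finrank K V = 2) {a : V} (ha : a ≠ 0) (b : V) :
    ∃ e : Basis (Fin 2) K V, (e.repr a 0 = 0 ∨ e.repr a 1 = 0) ∧
      (e.repr b 0 = 0 ∨ e.repr b 1 = 0) := by
  have : Nontrivial V := ⟨a, 0, ha⟩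
  by_cases hab : LinearIndependent K ![a, b]
  · let e := basisOfLinearIndependentOfCardEqFinrank hab (by simp [hV])
    have h0 : e 0 = a := by simp [e]
    have h1 : e 1 = b := by simp [e]
    exact ⟨e, by simp [← h0], by simp [← h1]⟩
  · obtain ⟨c, hc⟩ := exists_linearIndependent_pair_of_one_lt_finrank (hV.symm ▸ one_lt_two) ha
    let e := basisOfLinearIndependentOfCardEqFinrank hc (by simp [hV])
    have h0 : e 0 = a := by simp [e]
    obtain ⟨r, rfl⟩ : ∃ r : K, r • a = b := by simpa [LinearIndependent.pair_iff' ha] using hab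
    exact ⟨e, by simp [← h0], by simp [← h0]⟩

lemma exists_basis_repr_mem_lines (hV : finrank K V = 2) {a : V} (ha : a ≠ 0) (b c : V) :
    ∃ e : Basis (Fin 2) K V, ∀ x ∈ ({a, b, c} : Set V),
      e.repr x 0 = 0 ∨ e.repr x 1 = 0 ∨ e.repr x 0 = e.repr x 1 := by
  obtain ⟨e, hea, heb⟩ := exists_basis_repr_mem_axes hV ha b
  by_cases hc : e.repr c 0 = 0 ∨ e.repr c 1 = 0
  · refine ⟨e, ?_⟩
    rintro x (rfl | rfl | rfl) <;> tauto
  · push Not at hc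
    let w : Fin 2 → Kˣ := ![Units.mk0 _ hc.1, Units.mk0 _ hc.2]
    refine ⟨e.unitsSMul w, ?_⟩
    rintro x (rfl | rfl | rfl)
    · simpa [Units.smul_def] using by tauto
    · simpa [Units.smul_def] using by tauto
    · simp [Units.smul_def, w, hc]

lemma exists_eq_smul_forall_mem_zero_one (z : Fin 2 → K) :
    ∃ (c : K) (u : Fin 2 → K), z = c • u ∧ (u 1 = 0 ∨ u 1 = 1) ∧
      (z 0 = 0 ∨ z 1 = 0 ∨ z 0 = z 1 → u 0 = 0 ∨ u 0 = 1) := by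
  by_cases hz : z 1 = 0
  · exact ⟨z 0, ![1, 0], by ext k; fin_cases k <;> simp [hz], by simp, by simp⟩
  · refine ⟨z 1, ![z 0 / z 1, 1], ?_, by simp, ?_⟩
    · ext k
      fin_cases k <;> simp [hz, mul_div_cancel₀]
    · rintro (h | h | h) <;> simp_all

lemma exists_normalization [Fintype ι] (hcard : 3 ≤ Fintype.card ι) {v : ι → Fin 2 → K}
    (hv : ∀ k, v k ≠ 0) :
    ∃ (g : Matrix (Fin 2) (Fin 2) K) (c : ι → K) (u : ι → Fin 2 → K) (s : Finset (ι × Fin 2)),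
      (∀ k, v k = c k • g *ᵥ u k) ∧ Fintype.card ι + 3 ≤ s.card ∧
        ∀ q ∈ s, u q.1 q.2 = 0 ∨ u q.1 q.2 = 1 := by
  classical
  obtain ⟨t, -, ht⟩ := Finset.exists_subset_card_eq (s := (Finset.univ : Finset ι)) hcard
  obtain ⟨i, j, k, hij, hik, hjk, rfl⟩ := Finset.card_eq_three.mp ht
  obtain ⟨e, he⟩ := exists_basis_repr_mem_lines (finrank_fin_fun K) (hv i) (v j) (v k)
  choose c u hu hu1 hu0 using fun k => exists_eq_smul_forall_mem_zero_one (K := K) (e.repr (v k))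
  refine ⟨(Pi.basisFun K (Fin 2)).toMatrix e, c, u,
    Finset.univ ×ˢ {1} ∪ {i, j, k} ×ˢ {0}, fun k => ?_, ?_, ?_⟩
  · rw [← Matrix.mulVec_smul, ← hu, Basis.toMatrix_mulVec_repr]
    rfl
  · rw [Finset.card_union_of_disjoint (Finset.disjoint_product.mpr (.inr (by simp))),
      Finset.card_product, Finset.card_product, ht]
    simp
  · rintro ⟨l, b⟩ hl
    simp only [Finset.mem_union, Finset.mem_product, Finset.mem_univ, true_and,
      Finset.mem_singleton, Finset.mem_insert] at hl
    obtain rfl | ⟨hl, rfl⟩ := hl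
    · exact hu1 l
    · exact hu0 l (he _ (by obtain rfl | rfl | rfl := hl <;> simp))

end Plane

/-! ### Non-feasibility -/

section NonFeasible

variable {n : ℕ} {L : Fin (n - 1) → ℕ}

/-- The configuration of weight `L` whose component `(j, a)` is spanned by the points with
parameters `u ⟨j, a, s⟩` of the curve given by `M`. The columns of `G j a` hold the coordinates of
the columns of the component with respect to these points. -/
def curveConfig (M : Matrix (Fin (n + 1)) (Fin (n + 1)) ℂ) (u : ColumnIndex L → Fin 2 → ℂ)
    (G : (j : Fin (n - 1)) → Fin (L j) → Matrix (Fin (j.1 + 1)) (Fin (j.1 + 1)) ℂ) : Config n L :=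
  fun j a => M * veronMatrix n (fun s => u ⟨j, a, s⟩) * G j a

/-- The coordinates of the data `(M, u, G)` defining a configuration `curveConfig M u G`. -/
abbrev CurveParam {n : ℕ} (L : Fin (n - 1) → ℕ) :=
  (Fin (n + 1) × Fin (n + 1)) ⊕ (ColumnIndex L × Fin 2) ⊕
    ((j : Fin (n - 1)) × (Fin (L j) × Fin (j.1 + 1) × Fin (j.1 + 1)))

/-- The point of the parameter space with indices `CurveParam L` given by `(M, u, G)`. -/
def curveParam (M : Matrix (Fin (n + 1)) (Fin (n + 1)) ℂ) (u : ColumnIndex L → Fin 2 → ℂ)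
    (G : (j : Fin (n - 1)) → Fin (L j) → Matrix (Fin (j.1 + 1)) (Fin (j.1 + 1)) ℂ) :
    CurveParam L → ℂ :=
  Sum.elim (fun q => M q.1 q.2)
    (Sum.elim (fun q => u q.1 q.2) fun q => G q.1 q.2.1 q.2.2.1 q.2.2.2)

lemma exists_eval_eq_curveConfig (L : Fin (n - 1) → ℕ) :
    ∃ φ : (j : Fin (n - 1)) × (Fin (L j) × Fin (n + 1) × Fin (j.1 + 1)) →
      MvPolynomial (CurveParam L) ℂ, ∀ M u G p, MvPolynomial.eval (curveParam M u G) (φ p) =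
        curveConfig M u G p.1 p.2.1 p.2.2.1 p.2.2.2 := by
  open MvPolynomial in
  refine ⟨fun p => ∑ s, (∑ k : Fin (n + 1), X (.inl (p.2.2.1, k)) *
    (X (.inr (.inl (⟨p.1, p.2.1, s⟩, 0))) ^ (k : ℕ) *
      X (.inr (.inl (⟨p.1, p.2.1, s⟩, 1))) ^ (n - (k : ℕ)))) *
        X (.inr (.inr ⟨p.1, p.2.1, s, p.2.2.2⟩)), fun M u G p => ?_⟩
  simp [curveParam, curveConfig, Matrix.mul_apply, veronMatrix, veron]

lemma exists_eq_curveConfig {M : Matrix (Fin (n + 1)) (Fin (n + 1)) ℂ} (hM : IsUnit M.det)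
    {A : Config n L} (hA : MaxIntersects (ratNormalCurve n M) A) :
    ∃ u G, (∀ k, u k ≠ 0) ∧ A = curveConfig M u G := by
  have hcomp : ∀ j a, ∃ (v : Fin (j.1 + 1) → Fin 2 → ℂ)
      (G : Matrix (Fin (j.1 + 1)) (Fin (j.1 + 1)) ℂ),
      (∀ s, v s ≠ 0) ∧ A j a = M * veronMatrix n v * G := fun j a =>
    exists_eq_mul_veronMatrix_mul hM (by omega) (hA j a)
  choose v G hv hAv using hcomp
  refine ⟨fun k => v k.1 k.2.1 k.2.2, G, fun k => hv _ _ _, ?_⟩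
  funext j a
  exact hAv j a

lemma veronMatrix_smul_mulVec {ι : Type*} [Fintype ι] [DecidableEq ι]
    {g : Matrix (Fin 2) (Fin 2) ℂ} {S : Matrix (Fin (n + 1)) (Fin (n + 1)) ℂ}
    (hS : ∀ v, veron n (g *ᵥ v) = S *ᵥ veron n v) (c : ι → ℂ) (u : ι → Fin 2 → ℂ) :
    veronMatrix n (fun k => c k • g *ᵥ u k) =
      S * veronMatrix n u * Matrix.diagonal fun k => c k ^ n := by
  ext r k
  rw [Matrix.mul_diagonal]
  change veron n (c k • g *ᵥ u k) r = _
  rw [veron_smul, hS]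
  exact mul_comm _ _

lemma exists_eq_smul_apply_eq_one {K ι κ : Type*} [Field K] [Nonempty ι] [Nonempty κ]
    (M : Matrix ι κ K) : ∃ (c : K) (N : Matrix ι κ K) (i : ι) (j : κ), M = c • N ∧ N i j = 1 := by
  by_cases hM : M = 0
  · exact ⟨0, Matrix.of 1, Classical.arbitrary ι, Classical.arbitrary κ, by simp [hM], rfl⟩
  · obtain ⟨i, j, hij⟩ : ∃ i j, M i j ≠ 0 := by
      simpa [← Matrix.ext_iff] using hM
    exact ⟨M i j, (M i j)⁻¹ • M, i, j, by rw [smul_inv_smul₀ hij], by simp [hij]⟩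

lemma exists_curveConfig_eq_normalized (hcard : 3 ≤ Fintype.card (ColumnIndex L))
    (M : Matrix (Fin (n + 1)) (Fin (n + 1)) ℂ) {v : ColumnIndex L → Fin 2 → ℂ} (hv : ∀ k, v k ≠ 0)
    (G : (j : Fin (n - 1)) → Fin (L j) → Matrix (Fin (j.1 + 1)) (Fin (j.1 + 1)) ℂ) :
    ∃ (M' : Matrix (Fin (n + 1)) (Fin (n + 1)) ℂ) (u : ColumnIndex L → Fin 2 → ℂ)
      (G' : (j : Fin (n - 1)) → Fin (L j) → Matrix (Fin (j.1 + 1)) (Fin (j.1 + 1)) ℂ)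
      (s : Finset (CurveParam L)), curveConfig M v G = curveConfig M' u G' ∧
      Fintype.card (ColumnIndex L) + 4 ≤ s.card ∧
        ∀ i ∈ s, curveParam M' u G' i ∈ ({0, 1} : Finset ℂ) := by
  obtain ⟨g, c, u, s, hvu, hs, hus⟩ := exists_normalization hcard hv
  obtain ⟨S, hS⟩ := exists_veron_mulVec_eq n g
  obtain ⟨r, N, i₀, j₀, hN, hN₁⟩ := exists_eq_smul_apply_eq_one (M * S)
  refine ⟨N, u, fun j a => r • (Matrix.diagonal (fun t => c ⟨j, a, t⟩ ^ n) * G j a),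
    ({(i₀, j₀)} : Finset _).disjSum (s.disjSum ∅), ?_, ?_, ?_⟩
  · funext j a
    simp only [curveConfig, hvu, veronMatrix_smul_mulVec hS, ← Matrix.mul_assoc, hN,
      Matrix.mul_smul, Matrix.smul_mul]
  · simp only [Finset.card_disjSum, Finset.card_singleton, Finset.card_empty]
    omega
  · simp only [Finset.mem_disjSum, Finset.mem_singleton, Finset.mem_insert]
    rintro _ (⟨_, rfl, rfl⟩ | ⟨_, ⟨q, hq, rfl⟩ | ⟨_, h, -⟩, rfl⟩)
    · exact .inr hN₁
    · exact hus q hq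
    · simp at h

lemma card_curveParam_lt (hL : (n + 3) * (n - 1) < ∑ j, L j * ((j.1 + 1) * (n - 1 - j.1))) :
    Fintype.card (CurveParam L) <
      Fintype.card ((j : Fin (n - 1)) × (Fin (L j) × Fin (n + 1) × Fin (j.1 + 1))) +
        (Fintype.card (ColumnIndex L) + 4) := by
  have hn : n - 1 ≠ 0 := by
    rintro hn
    have : IsEmpty (Fin (n - 1)) := hn ▸ Fin.isEmpty
    simp at hL
  have hentries : ∑ j, L j * ((n + 1) * (j.1 + 1)) = ∑ j, L j * ((j.1 + 1) * (n - 1 - j.1)) +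
      ∑ j, L j * (j.1 + 1) + ∑ j, L j * ((j.1 + 1) * (j.1 + 1)) := by
    simp only [← Finset.sum_add_distrib, ← mul_add]
    refine Finset.sum_congr rfl fun j _ => ?_
    have : n + 1 = (n - 1 - j.1) + 1 + (j.1 + 1) := by omega
    rw [this]
    ring_nf
  have hmatrix : (n + 1) * (n + 1) = (n + 3) * (n - 1) + 4 := by
    obtain ⟨m, rfl⟩ : ∃ m, n = m + 1 := ⟨n - 1, by omega⟩
    simp only [Nat.add_sub_cancel]
    ring
  simp only [Fintype.card_sum, Fintype.card_sigma, Fintype.card_prod, Fintype.card_fin,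
    hmatrix, hentries]
  omega

lemma three_le_card_columnIndex
    (hL : (n + 3) * (n - 1) < ∑ j, L j * ((j.1 + 1) * (n - 1 - j.1))) :
    3 ≤ Fintype.card (ColumnIndex L) := by
  have hle : ∑ j, L j * ((j.1 + 1) * (n - 1 - j.1)) ≤
      Fintype.card (ColumnIndex L) * (n - 1) := by
    simp only [Fintype.card_sigma, Fintype.card_prod, Fintype.card_fin, Finset.sum_mul, mul_assoc]
    exact Finset.sum_le_sum fun j _ =>
      Nat.mul_le_mul_left _ (Nat.mul_le_mul_left _ (Nat.sub_le _ _))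
  have := lt_of_mul_lt_mul_right' (hL.trans_le hle)
  omega

theorem nonFeasible_of_lt_sum
    (hL : (n + 3) * (n - 1) < ∑ j, L j * ((j.1 + 1) * (n - 1 - j.1))) : NonFeasible n L := by
  classical
  obtain ⟨φ, hφ⟩ := exists_eval_eq_curveConfig L
  obtain ⟨F, hF, hFφ⟩ := exists_ne_zero_eval_eq_zero_of_mem φ {0, 1} _ (card_curveParam_lt hL)
  refine ⟨F, hF, fun A _ hFA ⟨C, hC, hCA⟩ => hFA ?_⟩
  obtain ⟨M, hM, rfl⟩ := isRNC_iff.mp hC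
  obtain ⟨v, G, hv, rfl⟩ := exists_eq_curveConfig hM hCA
  obtain ⟨M', u, G', s, hconfig, hs, hmem⟩ :=
    exists_curveConfig_eq_normalized (three_le_card_columnIndex hL) M hv G
  rw [hconfig]
  simpa only [hφ] using hFφ _ s hs hmem

end NonFeasible

/-! ### Homogeneous configurations -/

lemma sum_ite_val_eq_mul {m i : ℕ} (hi : i < m) (l : ℕ) (w : ℕ → ℕ) :
    ∑ j : Fin m, (if j.1 = i then l else 0) * w j = l * w i := by
  rw [Finset.sum_eq_single ⟨i, hi⟩] <;> simp +contextual [Fin.ext_iff]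

lemma add_three_mul_lt_of_div_lt {n i l : ℕ} (hni : i ^ 2 + 5 * i + 1 < n)
    (hl : (n + 3 + i) / (i + 1) < l) :
    (n + 3) * (n - 1) < l * ((i + 1) * (n - 1 - i)) := by
  have hli : n + 4 + i ≤ l * (i + 1) := by
    have := (Nat.div_lt_iff_lt_mul (Nat.add_one_pos i)).mp hl
    omega
  obtain ⟨m, rfl⟩ : ∃ m, n = i + 1 + m := ⟨n - (i + 1), by omega⟩
  calc (i + 1 + m + 3) * (i + 1 + m - 1) = (i + m + 4) * (i + m) := by congr 1 <;> omega
    _ < (i + 1 + m + 4 + i) * m := by linarith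
    _ ≤ l * (i + 1) * m := by gcongr
    _ = l * ((i + 1) * (i + 1 + m - 1 - i)) := by rw [mul_assoc]; congr 2; omega

theorem homogeneous_configurations_general (n : ℕ) (L : Fin (n - 1) → ℕ) :
    (∑ j, L j * (j.1 + 1) ≤ n + 3 → Feasible n L) ∧
    ((n + 3) * (n - 1) < ∑ j, L j * ((j.1 + 1) * (n - 1 - j.1)) → NonFeasible n L) :=
  ⟨feasible_of_sum_le, nonFeasible_of_lt_sum⟩

/-- Homogeneous configurations: `l` generic `i`-dimensional subspaces in `ℙⁿ`, with
`n > i² + 5i + 1`.  Feasible for `l(i+1) ≤ n+3`, non-feasible for `l > ⌈(n+3)/(i+1)⌉`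
(the ceiling `⌈(n+3)/(i+1)⌉` is written as `(n + 3 + i) / (i + 1)` in natural division). -/
theorem homogeneous_configurations (n i l : ℕ) (hn : 3 ≤ n) (hi : i ≤ n - 2)
    (hni : i ^ 2 + 5 * i + 1 < n) (hl : 1 ≤ l)
    (L : Fin (n - 1) → ℕ) (hL : L = fun j => if j.1 = i then l else 0) :
    (l * (i + 1) ≤ n + 3 → Feasible n L) ∧
    ((n + 3 + i) / (i + 1) < l → NonFeasible n L) := by
  have hlt : i < n - 1 := by omega
  have h := homogeneous_configurations_general n L
  simp only [hL, sum_ite_val_eq_mul hlt l (· + 1),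
    sum_ite_val_eq_mul hlt l fun j => (j + 1) * (n - 1 - j)] at h
  exact hL ▸ h.imp_right fun hnon hdiv => hnon (add_three_mul_lt_of_div_lt hni hdiv)

end
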